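/- arXiv:1702.04623 — 3 statements merged into one kernel-verified Lean document; each statement's English description precedes it below -/
import Mathlib

section
/- For every n ≥ 4, the Euler characteristic of the line simplicial complex of the wheel graph W_{n+1} is χ(Δ_L(W_{n+1})) = n+1. -/
/-!
Because the hub `n + 1` is adjacent to every rim vertex, `{a, b, n + 1}` is a line index for all
distinct rim vertices `a, b`. So every vertex and every pair of vertices is a face, giving
`α₀ = n + 1` and `α₁ = (n + 1).choose 2`. Line indices have at most three elements, so the faces
with three vertices are the triples `{a, b, n + 1}` (there are `n.choose 2`) together with the rim
paths `{j - 1, j, j + 1}` taken cyclically, which are `n` distinct triples since `n ≥ 4`; no face is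
larger. By Pascal's rule,
`χ = (n + 1) - (n + 1).choose 2 + (n.choose 2 + n) = (n + 1) - n + n = n + 1`.
-/

open Finset

/-- The simplicial complex generated by a set `S` of finsets:
its faces are the subsets of members of `S`. -/
def complexOf {V : Type*} (S : Set (Finset V)) : Set (Finset V) :=
  {F | ∃ A ∈ S, F ⊆ A}

/-- The set of line indices of a graph `G`: triples `{i,j,k}` coming from two
distinct incident edges `{i,j}`, `{j,k}` of `G`, together with pairs `{i,j}`
for edges of `G` sharing no vertex with any other edge. -/
def lineIndices {V : Type*} [DecidableEq V] (G : SimpleGraph V) : Set (Finset V) :=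
  {F | (∃ i j k, G.Adj i j ∧ G.Adj j k ∧ i ≠ k ∧ F = {i, j, k}) ∨
       (∃ i j, G.Adj i j ∧ (∀ k, G.Adj i k → k = j) ∧ (∀ k, G.Adj j k → k = i) ∧
          F = {i, j})}

/-- The set of Gallai indices of a graph `G`: triples `{i,j,k}` coming from two
distinct incident edges `{i,j}`, `{j,k}` of `G` not spanning a triangle, together
with pairs `{i,j}` for edges of `G` all of whose incident edges form a triangle
with `{i,j}`. -/
def gallaiIndices {V : Type*} [DecidableEq V] (G : SimpleGraph V) : Set (Finset V) :=
  {F | (∃ i j k, G.Adj i j ∧ G.Adj j k ∧ i ≠ k ∧ ¬ G.Adj i k ∧ F = {i, j, k}) ∨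
       (∃ i j, G.Adj i j ∧ (∀ k, k ≠ j → G.Adj i k → G.Adj j k) ∧
          (∀ k, k ≠ i → G.Adj j k → G.Adj i k) ∧ F = {i, j})}

/-- The set of anti-Gallai indices of a graph `G`: the vertex sets of
triangles of `G`. -/
def antiGallaiIndices {V : Type*} [DecidableEq V] (G : SimpleGraph V) : Set (Finset V) :=
  {F | ∃ i j k, G.Adj i j ∧ G.Adj j k ∧ G.Adj i k ∧ F = {i, j, k}}

/-- The line simplicial complex of `G`. -/
def lineComplex {V : Type*} [DecidableEq V] (G : SimpleGraph V) : Set (Finset V) :=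
  complexOf (lineIndices G)

/-- The Gallai simplicial complex of `G`. -/
def gallaiComplex {V : Type*} [DecidableEq V] (G : SimpleGraph V) : Set (Finset V) :=
  complexOf (gallaiIndices G)

/-- The anti-Gallai simplicial complex of `G`. -/
def antiGallaiComplex {V : Type*} [DecidableEq V] (G : SimpleGraph V) : Set (Finset V) :=
  complexOf (antiGallaiIndices G)

/-- The facets (maximal faces) of a simplicial complex. -/
def facets {V : Type*} (Δ : Set (Finset V)) : Set (Finset V) :=
  {F | F ∈ Δ ∧ ∀ G ∈ Δ, F ⊆ G → F = G}

/-- A simplicial complex is connected if any two facets are linked by a chain of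
facets in which consecutive facets intersect. -/
def ComplexConnected {V : Type*} [DecidableEq V] (Δ : Set (Finset V)) : Prop :=
  ∀ F ∈ facets Δ, ∀ F' ∈ facets Δ, ∃ (q : ℕ) (f : ℕ → Finset V),
    f 0 = F ∧ f q = F' ∧ (∀ i ≤ q, f i ∈ facets Δ) ∧
    ∀ i < q, (f i ∩ f (i + 1)).Nonempty

/-- The Euler characteristic `χ(Δ) = ∑ₖ (-1)ᵏ αₖ`, where `αₖ` is the number of
faces of `Δ` with exactly `k+1` vertices. -/
noncomputable def eulerChar {V : Type*} (Δ : Set (Finset V)) : ℤ :=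
  ∑ᶠ k : ℕ, (-1 : ℤ) ^ k * ({F ∈ Δ | F.card = k + 1}.ncard : ℤ)

/-- A simplicial complex is shellable if its facets can be enumerated
`F_0, …, F_{s-1}` so that for each `0 < i` the subcomplex
`⟨F_0, …, F_{i-1}⟩ ∩ ⟨F_i⟩` is pure of dimension `dim Fᵢ - 1`. -/
def Shellable {V : Type*} (Δ : Set (Finset V)) : Prop :=
  ∃ (s : ℕ) (l : Fin s → Finset V),
    Function.Injective l ∧
    (∀ i, l i ∈ facets Δ) ∧
    (∀ F ∈ facets Δ, ∃ i, F = l i) ∧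
    ∀ i : Fin s, 0 < (i : ℕ) →
      ∀ F ∈ facets {H | H ⊆ l i ∧ ∃ j, j < i ∧ H ⊆ l j}, F.card + 1 = (l i).card

/-- The wheel graph `W_{n+1}` on vertices `1, …, n+1` (hub `n+1`). -/
def wheelGraph (n : ℕ) : SimpleGraph ℕ :=
  SimpleGraph.fromRel (fun a b =>
    (1 ≤ a ∧ a + 1 ≤ n ∧ b = a + 1) ∨ (a = n ∧ b = 1) ∨
    (1 ≤ a ∧ a ≤ n ∧ b = n + 1))

/-- The friendship graph `F_n` on vertices `1, …, 2n+1` (center `2n+1`). -/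
def friendshipGraph (n : ℕ) : SimpleGraph ℕ :=
  SimpleGraph.fromRel (fun a b =>
    (∃ i, 1 ≤ i ∧ i ≤ n ∧ a = 2 * i - 1 ∧ b = 2 * i) ∨
    (1 ≤ a ∧ a ≤ 2 * n ∧ b = 2 * n + 1))

/-- The star graph `S_m` on vertices `1, …, m+1` (center `m+1`). -/
def starGraph (m : ℕ) : SimpleGraph ℕ :=
  SimpleGraph.fromRel (fun a b => 1 ≤ a ∧ a ≤ m ∧ b = m + 1)

/-- The cycle `C₅` on vertices `1, …, 5`. -/
def cycleFive : SimpleGraph ℕ :=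
  SimpleGraph.fromRel (fun a b =>
    (a = 1 ∧ b = 2) ∨ (a = 2 ∧ b = 3) ∨ (a = 3 ∧ b = 4) ∨
    (a = 4 ∧ b = 5) ∨ (a = 5 ∧ b = 1))

/-- The stacked prism graph `Y_{3,n}` on vertices `1, …, 3n`. -/
def prismGraph (n : ℕ) : SimpleGraph ℕ :=
  SimpleGraph.fromRel (fun a b =>
    (∃ k, k < n ∧ ((a = 3 * k + 1 ∧ b = 3 * k + 2) ∨
       (a = 3 * k + 2 ∧ b = 3 * k + 3) ∨ (a = 3 * k + 1 ∧ b = 3 * k + 3))) ∨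
    (∃ k j, k + 2 ≤ n ∧ 1 ≤ j ∧ j ≤ 3 ∧ a = 3 * k + j ∧ b = 3 * (k + 1) + j))

lemma wheel_adj (n a b : ℕ) : (wheelGraph n).Adj a b ↔ a ≠ b ∧
    (((1 ≤ a ∧ a + 1 ≤ n ∧ b = a + 1) ∨ (a = n ∧ b = 1) ∨ (1 ≤ a ∧ a ≤ n ∧ b = n + 1)) ∨
     ((1 ≤ b ∧ b + 1 ≤ n ∧ a = b + 1) ∨ (b = n ∧ a = 1) ∨ (1 ≤ b ∧ b ≤ n ∧ a = n + 1))) := by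
  simp [wheelGraph, SimpleGraph.fromRel_adj]

/-- The predecessor of the rim vertex `j` in the cyclic order `1, …, n`. -/
def rimPred (n j : ℕ) : ℕ := if j = 1 then n else j - 1

/-- The successor of the rim vertex `j` in the cyclic order `1, …, n`. -/
def rimSucc (n j : ℕ) : ℕ := if j = n then 1 else j + 1

/-- The vertex set of the rim path of length two with middle vertex `j`. -/
def rimTriple (n j : ℕ) : Finset ℕ := {rimPred n j, j, rimSucc n j}

lemma hub_face {n a b : ℕ} (ha : a ∈ Icc 1 n) (hb : b ∈ Icc 1 n) (hab : a ≠ b)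
    {F : Finset ℕ} (hF : F ⊆ {a, n + 1, b}) : F ∈ lineComplex (wheelGraph n) := by
  rw [mem_Icc] at ha hb
  refine ⟨{a, n + 1, b}, Or.inl ⟨a, n + 1, b, ?_, ?_, hab, rfl⟩, hF⟩ <;>
  · rw [wheel_adj]; omega

/-- A face with three vertices is a whole line index of the first kind, since isolated edges
only contribute faces with at most two vertices. -/
lemma face_cases {n : ℕ} (hn : 4 ≤ n) {F : Finset ℕ} (hF : F ∈ lineComplex (wheelGraph n)) :
    F ⊆ Icc 1 (n + 1) ∧ F.card ≤ 3 ∧ (F.card = 3 →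
      ∃ i j k, (wheelGraph n).Adj i j ∧ (wheelGraph n).Adj j k ∧ i ≠ k ∧ F = {i, j, k}) := by
  obtain ⟨A, ⟨i, j, k, hij, hjk, hik, rfl⟩ | ⟨i, j, hij, -, -, rfl⟩, hFA⟩ := hF
  · have hc := card_le_card hFA
    have h3 : ({i, j, k} : Finset ℕ).card ≤ 3 := card_le_three
    refine ⟨hFA.trans ?_, hc.trans h3, fun h => ⟨i, j, k, hij, hjk, hik, ?_⟩⟩
    · rw [wheel_adj] at hij hjk
      intro x hx
      simp only [mem_insert, mem_singleton] at hx
      rw [mem_Icc]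
      omega
    · exact eq_of_subset_of_card_le hFA (by omega)
  · have hc := card_le_card hFA
    have h2 : ({i, j} : Finset ℕ).card ≤ 2 := card_le_two
    refine ⟨hFA.trans ?_, by omega, fun h => by omega⟩
    rw [wheel_adj] at hij
    intro x hx
    simp only [mem_insert, mem_singleton] at hx
    rw [mem_Icc]
    omega

lemma mem_of_card_two {n : ℕ} (hn : 4 ≤ n) {F : Finset ℕ} (hF : F ⊆ Icc 1 (n + 1))
    (h2 : F.card = 2) : F ∈ lineComplex (wheelGraph n) := by
  obtain ⟨a, b, hab, rfl⟩ := card_eq_two.mp h2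
  have ha := mem_Icc.mp (hF (by simp : a ∈ ({a, b} : Finset ℕ)))
  have hb := mem_Icc.mp (hF (by simp : b ∈ ({a, b} : Finset ℕ)))
  -- If one end is the hub, any rim vertex other than the remaining end completes the triple.
  have aux : ∀ x, 1 ≤ x → x ≤ n → ({x, n + 1} : Finset ℕ) ∈ lineComplex (wheelGraph n) := by
    intro x h1 hx
    refine hub_face (a := x) (b := if x = 1 then 2 else 1) (by simp; omega)
      (by rw [mem_Icc]; split_ifs <;> omega) (by split_ifs <;> omega) ?_
    intro y hy
    simp only [mem_insert, mem_singleton] at hy ⊢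
    tauto
  by_cases ha' : a = n + 1
  · subst ha'
    rw [pair_comm]
    exact aux b (by omega) (by omega)
  by_cases hb' : b = n + 1
  · subst hb'
    exact aux a (by omega) (by omega)
  refine hub_face (a := a) (b := b) (by simp; omega) (by simp; omega) hab ?_
  intro y hy
  simp only [mem_insert, mem_singleton] at hy ⊢
  tauto

lemma mem_of_card_one {n : ℕ} (hn : 4 ≤ n) {F : Finset ℕ} (hF : F ⊆ Icc 1 (n + 1))
    (h1 : F.card = 1) : F ∈ lineComplex (wheelGraph n) := by
  obtain ⟨G, hFG, hG, hc⟩ := exists_subsuperset_card_eq hF (n := 2) (by omega)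
    (by simp; omega)
  obtain ⟨A, hA, hGA⟩ := mem_of_card_two hn hG hc
  exact ⟨A, hA, hFG.trans hGA⟩

lemma faces_one {n : ℕ} (hn : 4 ≤ n) :
    {F ∈ lineComplex (wheelGraph n) | F.card = 1} = ↑(powersetCard 1 (Icc 1 (n + 1))) := by
  ext F
  simp only [Set.mem_ofPred_eq, mem_coe, mem_powersetCard]
  exact ⟨fun h => ⟨(face_cases hn h.1).1, h.2⟩, fun h => ⟨mem_of_card_one hn h.1 h.2, h.2⟩⟩

lemma faces_two {n : ℕ} (hn : 4 ≤ n) :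
    {F ∈ lineComplex (wheelGraph n) | F.card = 2} = ↑(powersetCard 2 (Icc 1 (n + 1))) := by
  ext F
  simp only [Set.mem_ofPred_eq, mem_coe, mem_powersetCard]
  exact ⟨fun h => ⟨(face_cases hn h.1).1, h.2⟩, fun h => ⟨mem_of_card_two hn h.1 h.2, h.2⟩⟩

lemma hub_triple_mem {n a b : ℕ} (ha : 1 ≤ a ∧ a ≤ n) (hb : 1 ≤ b ∧ b ≤ n) (hab : a ≠ b)
    {F : Finset ℕ} (hF : F = {n + 1, a, b}) :
    F ∈ (powersetCard 2 (Icc 1 n)).image (insert (n + 1)) := by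
  refine mem_image.mpr ⟨{a, b}, mem_powersetCard.mpr ⟨?_, card_pair hab⟩, hF.symm⟩
  intro x hx
  simp only [mem_insert, mem_singleton] at hx
  rw [mem_Icc]
  omega

lemma faces_three {n : ℕ} (hn : 4 ≤ n) :
    {F ∈ lineComplex (wheelGraph n) | F.card = 3} =
      ↑((powersetCard 2 (Icc 1 n)).image (insert (n + 1)) ∪ (Icc 1 n).image (rimTriple n)) := by
  ext F
  rw [Set.mem_ofPred_eq, mem_coe, mem_union]
  constructor
  · rintro ⟨hF, hc⟩
    obtain ⟨i, j, k, hij, hjk, hik, rfl⟩ := (face_cases hn hF).2.2 hc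
    rw [wheel_adj] at hij hjk
    by_cases hi : i = n + 1
    · subst hi
      exact Or.inl (hub_triple_mem (a := j) (b := k) (by omega) (by omega) (by omega) rfl)
    by_cases hj : j = n + 1
    · subst hj
      exact Or.inl (hub_triple_mem (a := i) (b := k) (by omega) (by omega) hik
        (insert_comm i (n + 1) {k}))
    by_cases hk : k = n + 1
    · subst hk
      exact Or.inl (hub_triple_mem (a := i) (b := j) (by omega) (by omega) (by omega)
        (by rw [pair_comm j, insert_comm i]))
    -- On the rim, `i` and `k` are the two cyclic neighbours of `j`, in one of the two orders.
    refine Or.inr (mem_image.mpr ⟨j, by rw [mem_Icc]; omega, ?_⟩)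
    have hcase : (rimPred n j = i ∧ rimSucc n j = k) ∨ (rimPred n j = k ∧ rimSucc n j = i) := by
      unfold rimPred rimSucc
      split_ifs <;> omega
    rw [rimTriple]
    rcases hcase with ⟨h1, h2⟩ | ⟨h1, h2⟩ <;> rw [h1, h2]
    rw [insert_comm k, pair_comm k, insert_comm j]
  · rintro (h | h)
    · obtain ⟨P, hP, rfl⟩ := mem_image.mp h
      obtain ⟨hP, hc⟩ := mem_powersetCard.mp hP
      obtain ⟨a, b, hab, rfl⟩ := card_eq_two.mp hc
      have ha := hP (by simp : a ∈ ({a, b} : Finset ℕ))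
      have hb := hP (by simp : b ∈ ({a, b} : Finset ℕ))
      refine ⟨hub_face ha hb hab ?_, ?_⟩
      · intro y hy
        simp only [mem_insert, mem_singleton] at hy ⊢
        tauto
      · rw [card_insert_of_notMem, hc]
        exact fun h => by simpa using hP h
    · obtain ⟨j, hj, rfl⟩ := mem_image.mp h
      rw [mem_Icc] at hj
      have h1 : rimPred n j ≠ j ∧ rimPred n j ≠ rimSucc n j ∧ j ≠ rimSucc n j := by
        unfold rimPred rimSucc
        split_ifs <;> omega
      refine ⟨⟨rimTriple n j, Or.inl ⟨rimPred n j, j, rimSucc n j, ?_, ?_, h1.2.1, rfl⟩,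
        Subset.rfl⟩, card_eq_three.mpr ⟨_, _, _, h1.1, h1.2.1, h1.2.2, rfl⟩⟩
      · rw [wheel_adj]
        refine ⟨h1.1, ?_⟩
        unfold rimPred
        split_ifs <;> omega
      · rw [wheel_adj]
        refine ⟨h1.2.2, ?_⟩
        unfold rimSucc
        split_ifs <;> omega

/-- For `n = 3` this fails: every rim path is then the whole rim. -/
lemma rimTriple_injOn {n : ℕ} (hn : 4 ≤ n) : Set.InjOn (rimTriple n) (Icc 1 n) := by
  intro a ha b hb hab
  rw [mem_coe, mem_Icc] at ha hb
  have h1 : a ∈ rimTriple n b := hab ▸ (by simp [rimTriple])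
  have h2 : rimPred n a ∈ rimTriple n b := hab ▸ (by simp [rimTriple])
  have h3 : rimSucc n a ∈ rimTriple n b := hab ▸ (by simp [rimTriple])
  simp only [rimTriple, mem_insert, mem_singleton, rimPred, rimSucc] at h1 h2 h3
  split_ifs at h1 h2 h3 <;> omega

lemma card_faces_three {n : ℕ} (hn : 4 ≤ n) :
    ((powersetCard 2 (Icc 1 n)).image (insert (n + 1)) ∪ (Icc 1 n).image (rimTriple n)).card =
      n.choose 2 + n := by
  rw [card_union_of_disjoint, card_image_of_injOn, card_image_of_injOn (rimTriple_injOn hn),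
    card_powersetCard]
  · simp
  · intro P hP Q hQ h
    have key : ∀ R ∈ powersetCard 2 (Icc 1 n), n + 1 ∉ R := fun R hR hmem => by
      simpa using (mem_powersetCard.mp hR).1 hmem
    have herase := congrArg (fun R => R.erase (n + 1)) h
    simpa [erase_insert (key P hP), erase_insert (key Q hQ)] using herase
  · rw [disjoint_left]
    -- Only triples of the first kind contain the hub.
    intro F hF hF'
    obtain ⟨P, -, rfl⟩ := mem_image.mp hF
    obtain ⟨j, hj, h⟩ := mem_image.mp hF'
    rw [mem_Icc] at hj
    have hm : n + 1 ∈ rimTriple n j := h ▸ mem_insert_self _ _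
    simp only [rimTriple, mem_insert, mem_singleton, rimPred, rimSucc] at hm
    split_ifs at hm <;> omega

/-- For `n ≥ 4`, `χ(Δ_L(W_{n+1})) = n + 1`. -/
theorem stmt7 (n : ℕ) (hn : 4 ≤ n) :
    eulerChar (lineComplex (wheelGraph n)) = (n : ℤ) + 1 := by
  unfold eulerChar
  rw [finsum_eq_sum_of_support_subset (s := range 3)]
  · simp only [sum_range_succ, sum_range_zero, Nat.reduceAdd, faces_one hn, faces_two hn,
      faces_three hn, Set.ncard_coe_finset, card_faces_three hn, card_powersetCard,
      Nat.card_Icc, Nat.add_sub_cancel]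
    have h := Nat.choose_succ_succ n 1
    simp only [Nat.choose_one_right, Nat.succ_eq_add_one, Nat.reduceAdd] at h ⊢
    rw [h]
    push_cast
    ring
  · intro k hk
    by_contra hk3
    have hk3 : 3 ≤ k := by simpa using hk3
    have he : {F ∈ lineComplex (wheelGraph n) | F.card = k + 1} = ∅ := by
      ext F
      simp only [Set.mem_ofPred_eq, Set.mem_empty_iff_false, iff_false, not_and]
      intro hF hc
      have := (face_cases hn hF).2.1
      omega
    exact hk (by simp only [he, Set.ncard_empty, Nat.cast_zero, mul_zero])
end

section
/- For every n ≥ 1, the line simplicial complex Δ_L(F_n) of the friendship graph F_n is shellable. -/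
/-!
Write `c = 2n + 1` for the center. Any two distinct vertices other than `c` are both adjacent
to `c`, and every pair of incident edges of `F_n` covers `c`, since a vertex
other than `c` has only one neighbour besides `c`. Hence the line indices, and also the
facets, are exactly the triples `{a, b, c}` with `1 ≤ a < b ≤ 2n`
(`lineIndices_friendshipGraph`, `facets_complexOf_of_card`): the complex is a cone over the
complete graph on `2n` vertices.

The lexicographic order on the pairs `(a, b)` is a shelling (`lex_exchange`). If `(a', b')` precedes
`(a, b)`, then `{a', b', c} ∩ {a, b, c}` is contained in `{a, c}` or in `{b, c}`. The edge `{b, c}`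
is only needed when `a' < a`, and then it lies in the earlier facet `{a', b, c}`; the edge `{a, c}`
lies in `{a', a, c}` if `a' < a`, and in `{a, b', c}` if `a' = a`.
-/


open Finset

theorem friendshipGraph_adj (n x y : ℕ) : (friendshipGraph n).Adj x y ↔
    (∃ i, 1 ≤ i ∧ i ≤ n ∧ (x = 2 * i - 1 ∧ y = 2 * i ∨ y = 2 * i - 1 ∧ x = 2 * i)) ∨
    (1 ≤ x ∧ x ≤ 2 * n ∧ y = 2 * n + 1) ∨ (1 ≤ y ∧ y ≤ 2 * n ∧ x = 2 * n + 1) := by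
  simp only [friendshipGraph, SimpleGraph.fromRel_adj]
  constructor
  · rintro ⟨-, (⟨i, h⟩ | h) | (⟨i, h⟩ | h)⟩
    · exact Or.inl ⟨i, by omega⟩
    · omega
    · exact Or.inl ⟨i, by omega⟩
    · omega
  · rintro (⟨i, h1, h2, h | h⟩ | h | h)
    · exact ⟨by omega, Or.inl (Or.inl ⟨i, by omega⟩)⟩
    · exact ⟨by omega, Or.inr (Or.inl ⟨i, by omega⟩)⟩
    · exact ⟨by omega, Or.inl (Or.inr h)⟩
    · exact ⟨by omega, Or.inr (Or.inr h)⟩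

theorem lineIndices_friendshipGraph (n : ℕ) : lineIndices (friendshipGraph n) =
    {F | ∃ a b, 1 ≤ a ∧ a < b ∧ b ≤ 2 * n ∧ F = {a, b, 2 * n + 1}} := by
  -- The two vertices of a line index other than the center may come in either order.
  have key : ∀ x y : ℕ, ∀ F : Finset ℕ, 1 ≤ x → x ≤ 2 * n → 1 ≤ y → y ≤ 2 * n → x ≠ y →
      F = {x, y, 2 * n + 1} →
      ∃ a b, 1 ≤ a ∧ a < b ∧ b ≤ 2 * n ∧ F = {a, b, 2 * n + 1} := by
    intro x y F hx hx' hy hy' hxy hF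
    rcases lt_or_gt_of_ne hxy with h | h
    · exact ⟨x, y, hx, h, hy', hF⟩
    · exact ⟨y, x, hy, h, hx', by rw [hF, Finset.insert_comm]⟩
  ext F
  simp only [lineIndices, Set.mem_ofPred_eq]
  constructor
  · rintro (⟨i, j, k, hij, hjk, hik, rfl⟩ | ⟨i, j, hij, hi, hj, rfl⟩)
    · rw [friendshipGraph_adj] at hij hjk
      rcases hij with ⟨p, hp⟩ | hij | hij
      · rcases hjk with ⟨q, hq⟩ | hjk | hjk
        · omega
        · exact key i j _ (by omega) (by omega) (by omega) (by omega) (by omega)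
            (by rw [hjk.2.2])
        · omega
      · rcases hjk with ⟨q, hq⟩ | hjk | hjk
        · omega
        · omega
        · exact key i k _ (by omega) (by omega) (by omega) (by omega) (by omega)
            (by rw [hij.2.2]; ext; simp; tauto)
      · rcases hjk with ⟨q, hq⟩ | hjk | hjk
        · exact key j k _ (by omega) (by omega) (by omega) (by omega) (by omega)
            (by rw [hij.2.2]; ext; simp; tauto)
        · omega
        · omega
    · exfalso
      -- No edge is isolated: `{i, j}` is either one side of a triangle with the center, or a spoke.
      have hij' := hij
      rw [friendshipGraph_adj] at hij'
      have mate : ∀ x, 1 ≤ x → x ≤ 2 * n → ∃ y, y ≠ 2 * n + 1 ∧ (friendshipGraph n).Adj x y := by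
        intro x h1 h2
        rcases Nat.even_or_odd' x with ⟨m, hm | hm⟩
        · exact ⟨2 * m - 1, by omega, (friendshipGraph_adj _ _ _).2 (Or.inl ⟨m, by omega⟩)⟩
        · exact ⟨2 * m + 2, by omega, (friendshipGraph_adj _ _ _).2 (Or.inl ⟨m + 1, by omega⟩)⟩
      rcases hij' with ⟨p, hp⟩ | h | h
      · have := hi (2 * n + 1) ((friendshipGraph_adj _ _ _).2 (Or.inr (Or.inl (by omega))))
        omega
      · obtain ⟨y, hy, hadj⟩ := mate i h.1 h.2.1
        have := hi y hadj
        omega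
      · obtain ⟨y, hy, hadj⟩ := mate j h.1 h.2.1
        have := hj y hadj
        omega
  · rintro ⟨a, b, ha, hab, hb, rfl⟩
    exact Or.inl ⟨a, 2 * n + 1, b,
      (friendshipGraph_adj _ _ _).2 (by omega), (friendshipGraph_adj _ _ _).2 (by omega),
      hab.ne, by rw [Finset.pair_comm b]⟩

/-- Generators of equal cardinality are pairwise incomparable, so all of them are facets. -/
theorem facets_complexOf_of_card {V : Type*} {S : Set (Finset V)} {d : ℕ}
    (h : ∀ F ∈ S, F.card = d) : facets (complexOf S) = S := by
  ext F
  constructor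
  · rintro ⟨⟨A, hA, hFA⟩, hmax⟩
    rw [hmax A ⟨A, hA, subset_rfl⟩ hFA]
    exact hA
  · intro hF
    refine ⟨⟨F, hF, subset_rfl⟩, ?_⟩
    rintro G ⟨A, hA, hGA⟩ hFG
    have := Finset.card_le_card hGA
    exact Finset.eq_of_subset_of_card_le hFG (by rw [h F hF, ← h A hA]; exact this)

/-- The facet `{a, b, 2n+1}` of the line complex of `F_n` attached to a pair `(a, b)`. -/
def coneTriple (n : ℕ) (p : ℕ ×ₗ ℕ) : Finset ℕ :=
  {(ofLex p).1, (ofLex p).2, 2 * n + 1}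

/-- The pairs `(a, b)` with `1 ≤ a < b ≤ 2n`, carrying the lexicographic order. -/
def trianglePairs (n : ℕ) : Finset (ℕ ×ₗ ℕ) :=
  ((Finset.Icc 1 (2 * n) ×ˢ Finset.Icc 1 (2 * n)).filter (fun p => p.1 < p.2)).map
    toLex.toEmbedding

theorem mem_trianglePairs {n a b : ℕ} :
    toLex (a, b) ∈ trianglePairs n ↔ 1 ≤ a ∧ a < b ∧ b ≤ 2 * n := by
  simp [trianglePairs]
  omega

theorem coneTriple_card {n : ℕ} {p : ℕ ×ₗ ℕ} (hp : p ∈ trianglePairs n) :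
    (coneTriple n p).card = 3 := by
  obtain ⟨⟨a, b⟩, rfl⟩ := toLex.surjective p
  rw [mem_trianglePairs] at hp
  exact Finset.card_eq_three.2 ⟨a, b, 2 * n + 1, by omega, by omega, by omega, rfl⟩

theorem coneTriple_injOn {n : ℕ} {p q : ℕ ×ₗ ℕ} (hp : p ∈ trianglePairs n)
    (hq : q ∈ trianglePairs n) (h : coneTriple n p = coneTriple n q) : p = q := by
  obtain ⟨⟨a, b⟩, rfl⟩ := toLex.surjective p
  obtain ⟨⟨a', b'⟩, rfl⟩ := toLex.surjective q
  rw [mem_trianglePairs] at hp hq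
  simp only [coneTriple, ofLex_toLex, Finset.ext_iff, Finset.mem_insert,
    Finset.mem_singleton] at h
  have h1 := h a
  have h2 := h b
  have h3 := h a'
  have h4 := h b'
  have : a = a' ∧ b = b' := by omega
  rw [this.1, this.2]

/-- The exchange property making the lexicographic order a shelling: the intersection of a
facet with an earlier one lies in an edge of the facet which is shared with an earlier facet. -/
theorem lex_exchange {n : ℕ} {p q : ℕ ×ₗ ℕ} (hp : p ∈ trianglePairs n)
    (hq : q ∈ trianglePairs n) (hqp : q < p) :
    ∃ E : Finset ℕ, E.card = 2 ∧ E ⊆ coneTriple n p ∧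
      coneTriple n p ∩ coneTriple n q ⊆ E ∧
      ∃ r ∈ trianglePairs n, r < p ∧ E ⊆ coneTriple n r := by
  obtain ⟨⟨a, b⟩, rfl⟩ := toLex.surjective p
  obtain ⟨⟨a', b'⟩, rfl⟩ := toLex.surjective q
  rw [mem_trianglePairs] at hp hq
  rw [Prod.Lex.toLex_lt_toLex] at hqp
  dsimp only at hqp
  by_cases hb : a' < a ∧ b' = b
  · refine ⟨{b, 2 * n + 1}, Finset.card_pair (by omega), ?_, ?_,
      toLex (a', b), mem_trianglePairs.2 (by omega),
      Prod.Lex.toLex_lt_toLex.2 (Or.inl hb.1), ?_⟩ <;>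
    · intro x
      simp only [coneTriple, ofLex_toLex, Finset.mem_inter, Finset.mem_insert,
        Finset.mem_singleton]
      omega
  · rcases hqp with h | ⟨rfl, h⟩
    · refine ⟨{a, 2 * n + 1}, Finset.card_pair (by omega), ?_, ?_,
        toLex (a', a), mem_trianglePairs.2 (by omega),
        Prod.Lex.toLex_lt_toLex.2 (Or.inl h), ?_⟩ <;>
      · intro x
        simp only [coneTriple, ofLex_toLex, Finset.mem_inter, Finset.mem_insert,
          Finset.mem_singleton]
        omega
    · refine ⟨{a', 2 * n + 1}, Finset.card_pair (by omega), ?_, ?_,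
        toLex (a', b'), mem_trianglePairs.2 (by omega),
        Prod.Lex.toLex_lt_toLex.2 (Or.inr ⟨rfl, h⟩), ?_⟩ <;>
      · intro x
        simp only [coneTriple, ofLex_toLex, Finset.mem_inter, Finset.mem_insert,
          Finset.mem_singleton]
        omega

theorem facets_lineComplex_friendshipGraph (n : ℕ) :
    facets (lineComplex (friendshipGraph n)) = coneTriple n '' (trianglePairs n) := by
  have hS : lineIndices (friendshipGraph n) = coneTriple n '' (trianglePairs n) := by
    rw [lineIndices_friendshipGraph]
    ext F
    constructor
    · rintro ⟨a, b, ha, hab, hb, rfl⟩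
      exact ⟨toLex (a, b), mem_trianglePairs.2 ⟨ha, hab, hb⟩, rfl⟩
    · rintro ⟨p, hp, rfl⟩
      obtain ⟨⟨a, b⟩, rfl⟩ := toLex.surjective p
      obtain ⟨ha, hab, hb⟩ := mem_trianglePairs.1 hp
      exact ⟨a, b, ha, hab, hb, rfl⟩
  rw [lineComplex, hS]
  refine facets_complexOf_of_card (d := 3) ?_
  rintro _ ⟨p, hp, rfl⟩
  exact coneTriple_card hp

/-- For `n ≥ 1`, the line simplicial complex of the friendship graph
`F_n` is shellable. -/
theorem stmt14 (n : ℕ) (hn : 1 ≤ n) :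
    Shellable (lineComplex (friendshipGraph n)) := by
  let e := (trianglePairs n).orderIsoOfFin rfl
  refine ⟨(trianglePairs n).card, fun i => coneTriple n (e i), ?_, ?_, ?_, ?_⟩
  · intro i j h
    exact e.injective (Subtype.ext (coneTriple_injOn (e i).2 (e j).2 h))
  · intro i
    rw [facets_lineComplex_friendshipGraph]
    exact ⟨_, (e i).2, rfl⟩
  · intro F hF
    rw [facets_lineComplex_friendshipGraph] at hF
    obtain ⟨p, hp, rfl⟩ := hF
    exact ⟨e.symm ⟨p, hp⟩, by simp⟩
  · rintro i - F ⟨⟨hFi, j, hji, hFj⟩, hmax⟩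
    obtain ⟨E, hE, hEi, hsub, r, hr, hri, hEr⟩ :=
      lex_exchange (e i).2 (e j).2 (e.lt_iff_lt.2 hji)
    -- By maximality, `F` is the whole shared edge `E`.
    have hFE : F = E := by
      refine hmax E ⟨hEi, e.symm ⟨r, hr⟩, ?_, ?_⟩ ((Finset.subset_inter hFi hFj).trans hsub)
      · rw [← e.lt_iff_lt, OrderIso.apply_symm_apply]
        exact hri
      · simpa using hEr
    rw [hFE, hE, coneTriple_card (e i).2]
end

section
/- For every n ≥ 4, the line simplicial complex Δ_L(W_{n+1}) of the wheel graph W_{n+1} is shellable. -/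
/-!
Write `h = n + 1` for the hub. Every line index of the wheel is a 3-subset of `{1, …, h}`, and
every 3-subset containing `h` is a line index, because `h` is adjacent to all other vertices; no
edge is isolated. Order the line indices by *decreasing* colexicographic order, so that those
containing `h` come first. If `G` precedes `F`, pick `b ∈ F \ G`. There is `c ∉ F` with `c > b`
such that `K = (F \ {b}) ∪ {c}` contains `h`: take `c = h` if `h ∉ F`; otherwise `h ∈ G` too, so
`b ≠ h` and some `c ∈ G \ F` exceeds `b` by the colexicographic comparison. Then `K` is a line
index preceding `F`, and `F ∩ G ⊆ F ∩ K = F \ {b}`. This exchange property is the usual criterion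
for a shelling (`shellable_of_rank`), and the colexicographic order supplies the exchange
(`wheel_exchange`).
-/

open Finset

/-- The exchange criterion for shellability of a pure complex: if `F ↦ r F` ranks the finitely
many generators (all of size `d`) and, whenever `G` precedes `F`, some `K` preceding `F` meets `F`
in `d - 1` vertices that include `F ∩ G`, then listing the generators by rank is a shelling. -/
lemma shellable_of_rank {V α : Type*} [DecidableEq V] [LinearOrder α] (S : Set (Finset V))
    (hS : S.Finite) (d : ℕ) (r : Finset V → α) (hr : Function.Injective r)
    (hcard : ∀ F ∈ S, F.card = d)
    (hex : ∀ F ∈ S, ∀ G ∈ S, r G < r F →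
      ∃ K ∈ S, r K < r F ∧ F ∩ G ⊆ K ∧ (F ∩ K).card + 1 = d) :
    Shellable (complexOf S) := by
  classical
  have hfac : ∀ F, F ∈ facets (complexOf S) ↔ F ∈ S := by
    intro F
    constructor
    · rintro ⟨⟨A, hA, hFA⟩, hmax⟩
      rw [hmax A ⟨A, hA, subset_rfl⟩ hFA]
      exact hA
    · intro hF
      refine ⟨⟨F, hF, subset_rfl⟩, ?_⟩
      rintro G ⟨A, hA, hGA⟩ hFG
      have hFA : F = A := Finset.eq_of_subset_of_card_le (hFG.trans hGA)
        (by rw [hcard F hF, hcard A hA])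
      exact subset_antisymm hFG (hFA ▸ hGA)
  let T : Finset α := hS.toFinset.image r
  let e := T.orderIsoOfFin rfl
  have hpre : ∀ i, ∃ F ∈ S, r F = e i := by
    intro i
    obtain ⟨F, hF, hFi⟩ := Finset.mem_image.1 (e i).2
    exact ⟨F, hS.mem_toFinset.1 hF, hFi⟩
  choose l hlS hlr using hpre
  have hlt : ∀ i j, r (l i) < r (l j) ↔ i < j := by
    intro i j
    rw [hlr, hlr, Subtype.coe_lt_coe, e.lt_iff_lt]
  have hsurj : ∀ F ∈ S, ∃ i, F = l i := by
    intro F hF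
    have hFT : r F ∈ T := Finset.mem_image_of_mem r (hS.mem_toFinset.2 hF)
    refine ⟨e.symm ⟨r F, hFT⟩, hr ?_⟩
    rw [hlr, OrderIso.apply_symm_apply]
  refine ⟨T.card, l, ?_, fun i => (hfac _).2 (hlS i), fun F hF => hsurj F ((hfac F).1 hF), ?_⟩
  · intro i j hij
    apply e.injective
    apply Subtype.ext
    rw [← hlr, ← hlr, hij]
  · rintro i - F ⟨⟨hFi, j, hji, hFj⟩, hmax⟩
    obtain ⟨K, hK, hKr, hsub, hc⟩ := hex _ (hlS i) _ (hlS j) ((hlt j i).2 hji)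
    obtain ⟨k, rfl⟩ := hsurj K hK
    have hF : F = l i ∩ l k := hmax _
      ⟨Finset.inter_subset_left, k, (hlt k i).1 hKr, Finset.inter_subset_right⟩
      (Finset.subset_inter hFi ((Finset.subset_inter hFi hFj).trans hsub))
    rw [hF, hc, hcard _ (hlS i)]

lemma wheel_adj_bounds {n a b : ℕ} (hn : 1 ≤ n) (h : (wheelGraph n).Adj a b) :
    a ≠ b ∧ 1 ≤ a ∧ a ≤ n + 1 ∧ 1 ≤ b ∧ b ≤ n + 1 := by
  simp only [wheelGraph, SimpleGraph.fromRel_adj, ne_eq] at h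
  obtain ⟨hne, h⟩ := h
  refine ⟨hne, ?_⟩
  omega

lemma wheel_adj_hub {n a : ℕ} (h1 : 1 ≤ a) (h2 : a ≤ n) : (wheelGraph n).Adj a (n + 1) := by
  simp only [wheelGraph, SimpleGraph.fromRel_adj]
  exact ⟨by omega, Or.inl (Or.inr (Or.inr ⟨h1, h2, trivial⟩))⟩

lemma lineIndices_wheel_card {n : ℕ} (hn : 4 ≤ n) {F : Finset ℕ}
    (hF : F ∈ lineIndices (wheelGraph n)) : F.card = 3 ∧ F ⊆ Finset.Icc 1 (n + 1) := by
  rcases hF with ⟨i, j, k, hij, hjk, hik, rfl⟩ | ⟨i, j, hij, hi, hj, rfl⟩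
  · have h1 := wheel_adj_bounds (by omega) hij
    have h2 := wheel_adj_bounds (by omega) hjk
    refine ⟨Finset.card_eq_three.2 ⟨i, j, k, h1.1, hik, h2.1, rfl⟩, ?_⟩
    intro x hx
    simp only [Finset.mem_insert, Finset.mem_singleton] at hx
    rw [Finset.mem_Icc]
    omega
  · exfalso
    have h1 := wheel_adj_bounds (by omega) hij
    have a1 := (wheel_adj_hub (n := n) (a := 1) le_rfl (by omega)).symm
    have a2 := (wheel_adj_hub (n := n) (a := 2) (by omega) (by omega)).symm
    -- The hub is an end of an isolated edge, yet it has the two neighbours `1` and `2`.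
    by_cases hi' : i = n + 1
    · subst hi'
      have := hi 1 a1
      have := hi 2 a2
      omega
    · have hjh := hi _ (wheel_adj_hub h1.2.1 (by omega))
      subst hjh
      have := hj 1 a1
      have := hj 2 a2
      omega

lemma mem_lineIndices_wheel {n : ℕ} {F : Finset ℕ} (hc : F.card = 3)
    (hF : F ⊆ Finset.Icc 1 (n + 1)) (hh : n + 1 ∈ F) : F ∈ lineIndices (wheelGraph n) := by
  obtain ⟨a, b, hab, he⟩ := Finset.card_eq_two.1
    (show (F.erase (n + 1)).card = 2 by rw [Finset.card_erase_of_mem hh, hc])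
  have key : ∀ x ∈ F.erase (n + 1), (wheelGraph n).Adj x (n + 1) := by
    intro x hx
    have h1 := Finset.mem_Icc.1 (hF (Finset.mem_of_mem_erase hx))
    have h2 := Finset.ne_of_mem_erase hx
    exact wheel_adj_hub h1.1 (by omega)
  refine Or.inl ⟨a, n + 1, b, key a (by simp [he]), (key b (by simp [he])).symm, hab, ?_⟩
  rw [← Finset.insert_erase hh, he, Finset.insert_comm]

/-- Replacing `b` by a larger new element `c` moves a set up in the colexicographic order. -/
lemma toColex_lt_exchange {F : Finset ℕ} {b c : ℕ} (hc : c ∉ F) (hbc : b ≤ c) :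
    toColex F < toColex (insert c (F.erase b)) := by
  refine lt_of_le_of_ne ?_ ?_
  · rw [Finset.Colex.toColex_le_toColex]
    intro a ha ha'
    have : a = b := by
      by_contra hne
      exact ha' (Finset.mem_insert_of_mem (Finset.mem_erase.2 ⟨hne, ha⟩))
    exact ⟨c, Finset.mem_insert_self _ _, hc, this ▸ hbc⟩
  · intro h
    have h' : F = insert c (F.erase b) := toColex_inj.1 h
    exact hc (h' ▸ Finset.mem_insert_self _ _)

lemma wheel_exchange {n : ℕ} (hn : 4 ≤ n) {F G : Finset ℕ}
    (hF : F ∈ lineIndices (wheelGraph n)) (hG : G ∈ lineIndices (wheelGraph n))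
    (hlt : toColex F < toColex G) :
    ∃ K ∈ lineIndices (wheelGraph n), toColex F < toColex K ∧ F ∩ G ⊆ K ∧
      (F ∩ K).card + 1 = 3 := by
  obtain ⟨hFc, hFs⟩ := lineIndices_wheel_card hn hF
  obtain ⟨hGc, hGs⟩ := lineIndices_wheel_card hn hG
  have hle := Finset.Colex.toColex_le_toColex.1 hlt.le
  obtain ⟨b, hbF, hbG⟩ : ∃ b ∈ F, b ∉ G := by
    by_contra! hsub
    have : F = G := Finset.eq_of_subset_of_card_le hsub (by omega)
    exact hlt.ne (by rw [this])
  obtain ⟨c, hcF, hbc, hcI, hh⟩ : ∃ c, c ∉ F ∧ b ≤ c ∧ c ∈ Finset.Icc 1 (n + 1) ∧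
      n + 1 ∈ insert c (F.erase b) := by
    by_cases hhF : n + 1 ∈ F
    · obtain ⟨c, hcG, hcF, hbc⟩ := hle hbF hbG
      refine ⟨c, hcF, hbc, hGs hcG, Finset.mem_insert_of_mem (Finset.mem_erase.2 ⟨?_, hhF⟩)⟩
      -- Since `c ≤ n + 1` and `n + 1 ∈ F`, the removed element `b ≤ c` is not the hub.
      rintro rfl
      have := (Finset.mem_Icc.1 (hGs hcG)).2
      exact hcF (le_antisymm hbc this ▸ hhF)
    · exact ⟨n + 1, hhF, (Finset.mem_Icc.1 (hFs hbF)).2, by simp, Finset.mem_insert_self _ _⟩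
  have hcE : c ∉ F.erase b := fun h => hcF (Finset.mem_of_mem_erase h)
  have hEc : (F.erase b).card = 2 := by rw [Finset.card_erase_of_mem hbF, hFc]
  refine ⟨insert c (F.erase b), mem_lineIndices_wheel ?_ ?_ hh, toColex_lt_exchange hcF hbc, ?_, ?_⟩
  · rw [Finset.card_insert_of_notMem hcE, hEc]
  · exact Finset.insert_subset hcI ((Finset.erase_subset _ _).trans hFs)
  · intro x hx
    obtain ⟨hxF, hxG⟩ := Finset.mem_inter.1 hx
    exact Finset.mem_insert_of_mem (Finset.mem_erase.2 ⟨fun h => hbG (h ▸ hxG), hxF⟩)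
  · rw [Finset.inter_insert_of_notMem hcF, Finset.inter_eq_right.2 (Finset.erase_subset _ _), hEc]

/-- For `n ≥ 4`, the line simplicial complex of the wheel graph
`W_{n+1}` is shellable. -/
theorem stmt15 (n : ℕ) (hn : 4 ≤ n) :
    Shellable (lineComplex (wheelGraph n)) := by
  refine shellable_of_rank (lineIndices (wheelGraph n)) ?_ 3
    (fun F => OrderDual.toDual (toColex F)) ?_ (fun F hF => (lineIndices_wheel_card hn hF).1) ?_
  · refine (Finset.finite_toSet (Finset.Icc 1 (n + 1)).powerset).subset fun F hF => ?_
    exact Finset.mem_coe.2 (Finset.mem_powerset.2 (lineIndices_wheel_card hn hF).2)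
  · intro F G h
    exact toColex_inj.1 (OrderDual.toDual.injective h)
  · intro F hF G hG hlt
    exact wheel_exchange hn hF hG hlt
end
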